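/- There exists a 53×53 matrix with all entries equal to 1 or -1 whose determinant equals 2^52 · 13^25 · 105. Consequently md(53) ≥ 2^52 · 13^25 · 105. -/

import Mathlib

/-- `md n` is the maximal determinant of an `n × n` matrix all of whose
entries are `1` or `-1`. -/
noncomputable def md (n : ℕ) : ℤ :=
  sSup {d : ℤ | ∃ M : Matrix (Fin n) (Fin n) ℤ,
    (∀ i j, M i j = 1 ∨ M i j = -1) ∧ M.det = d}

/-!
Let `p, q, r` be three rows of a Hadamard matrix `H` of order `n`, with columns negated so that the
entrywise product of these rows is `1`. Border `H` by a row of ones, the corner entry `-2`, and a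
column that is `0` at `p, q, r` and otherwise carries the sign of the row sum. The inverse of `H` is
`Hᵀ / n`, so a Schur complement evaluates the bordered determinant to `-(2 + s / n) det H`, where
`s` is the sum of the absolute values of the row sums.

The border row and the rows `p, q, r` together have all entries in `{0, 4}`, except for the corner
column, where they add up to `-2`. Subtracting half their sum from each of these four rows thus
gives a `±1` matrix; this is a reflection in four coordinates, hence it only changes the sign of the
determinant.

A Williamson matrix of order `52` has three rows with `s = 316`, and then
`(2 + 316 / 52) * 52 ^ 26 = 2 ^ 52 * 13 ^ 25 * 105`.
-/

open Matrix

variable {m n R : Type*}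

/-- A `±1` matrix. -/
def IsSignMatrix (M : Matrix m n ℤ) : Prop :=
  ∀ i j, M i j = 1 ∨ M i j = -1

namespace IsSignMatrix

theorem updateRow_neg [DecidableEq m] {M : Matrix m n ℤ} (hM : IsSignMatrix M) (i : m) :
    IsSignMatrix (M.updateRow i (-M i)) := by
  intro k j
  rcases eq_or_ne k i with rfl | hki
  · rcases hM k j with h | h <;> simp [h]
  · simpa [hki] using hM k j

variable [Fintype n] [DecidableEq n] {M : Matrix n n ℤ}

theorem abs_det_le (hM : IsSignMatrix M) : |M.det| ≤ (Fintype.card n).factorial := by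
  have hentry (i j) : |M i j| ≤ 1 := by rcases hM i j with h | h <;> simp [h]
  simpa using det_le (abv := AbsoluteValue.abs) hentry

theorem det_le_md {k : ℕ} {M : Matrix (Fin k) (Fin k) ℤ} (hM : IsSignMatrix M) :
    M.det ≤ md k := by
  refine le_csSup ⟨k.factorial, ?_⟩ ⟨M, hM, rfl⟩
  rintro _ ⟨N, hN, rfl⟩
  simpa using (le_abs_self _).trans (IsSignMatrix.abs_det_le hN)

theorem exists_det_eq_abs [Nonempty n] (hM : IsSignMatrix M) :
    ∃ N : Matrix n n ℤ, IsSignMatrix N ∧ N.det = |M.det| := by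
  obtain ⟨i⟩ := ‹Nonempty n›
  rcases abs_choice M.det with h | h
  · exact ⟨M, hM, h.symm⟩
  · refine ⟨M.updateRow i (-M i), hM.updateRow_neg i, ?_⟩
    rw [h, ← neg_one_smul ℤ (M i), det_updateRow_smul, updateRow_eq_self, neg_one_mul]

theorem exists_fin_det_eq {k : ℕ} (hk : Fintype.card n = k) (hM : IsSignMatrix M) :
    ∃ N : Matrix (Fin k) (Fin k) ℤ, IsSignMatrix N ∧ N.det = M.det :=
  let e := Fintype.equivFinOfCardEq hk
  ⟨reindex e e M, fun _ _ => hM _ _, det_reindex_self e M⟩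

end IsSignMatrix

section Bordered

variable [CommRing R]

/-- The matrix `B` with a new first row `x`, a new first column `y` and the corner entry `a`. -/
def bordered (a : R) (x y : n → R) (B : Matrix n n R) : Matrix (Unit ⊕ n) (Unit ⊕ n) R :=
  fromBlocks (of fun _ _ => a) (replicateRow Unit x) (replicateCol Unit y) B

variable [Fintype n] [DecidableEq n]

-- A division-free Schur complement: `z / c` plays the role of `x B⁻¹`.
theorem mul_det_bordered {B : Matrix n n R} {c : R} {x z : n → R} (h : z ᵥ* B = c • x)
    (a : R) (y : n → R) :
    c * (bordered a x y B).det = (c * a - z ⬝ᵥ y) * B.det := by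
  have hclear : bordered c (-z) 0 1 * bordered a x y B = bordered (c * a - z ⬝ᵥ y) 0 y B := by
    have hrow : replicateRow Unit (-z) * B = -(c • replicateRow Unit x) := by
      rw [← replicateRow_smul, ← h]
      ext; simp [mul_apply, vecMul, dotProduct]
    rw [bordered, bordered, bordered, fromBlocks_multiply, hrow]
    congr 1 <;> ext <;> simp [mul_apply, dotProduct, sub_eq_add_neg]
  have hdet := congrArg det hclear
  rw [det_mul] at hdet
  simpa [bordered] using hdet

theorem mul_det_sub_vecMulVec {B : Matrix n n R} {c : R} {w z : n → R} (h : z ᵥ* B = c • w)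
    (v : n → R) :
    c * (B - vecMulVec v w).det = (c - z ⬝ᵥ v) * B.det := by
  have hschur : (bordered 1 w v B).det = (B - vecMulVec v w).det := by
    have hone : (of fun _ _ => 1 : Matrix Unit Unit R) = 1 := by ext; simp
    rw [bordered, hone, det_fromBlocks_one₁₁, vecMulVec_eq Unit]
  rw [← hschur, mul_det_bordered h, mul_one]

end Bordered

section Hadamard

variable [Fintype n] [DecidableEq n]

theorem isSignMatrix_of_isHadamard {H : Matrix n n ℤ} (hH : H.IsHadamard) : IsSignMatrix H :=
  fun i j => Unitary.mem_iff_eq_one_or_eq_neg_one.mp (hH.apply_mem i j)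

variable [CommRing R] [StarRing R] {H : Matrix n n R}

theorem det_sq_of_isHadamard [TrivialStar R] (hH : H.IsHadamard) :
    H.det ^ 2 = Fintype.card n ^ Fintype.card n := by
  rw [sq, ← hH.det_mul_star_det, star_trivial]

theorem sum_mul_eq_zero_of_isHadamard [TrivialStar R] (hH : H.IsHadamard) {i k : n}
    (hik : i ≠ k) : ∑ j, H i j * H k j = 0 := by
  simpa [mul_apply, hik] using congr_fun₂ hH.mul_conjTranspose i k

theorem isHadamard_mul_diagonal (hH : H.IsHadamard) {d : n → R} (hd : ∀ j, d j ∈ unitary R) :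
    (H * diagonal d).IsHadamard where
  apply_mem i j := by
    rw [mul_diagonal]
    exact mul_mem (hH.apply_mem i j) (hd j)
  mul_conjTranspose := by
    have hdiag : diagonal d * (diagonal d)ᴴ = 1 := by
      simp [diagonal_conjTranspose, fun j => Unitary.mul_star_self_of_mem (hd j)]
    rw [conjTranspose_mul, Matrix.mul_assoc, ← Matrix.mul_assoc (diagonal d), hdiag,
      Matrix.one_mul, hH.mul_conjTranspose]
  conjTranspose_mul := by
    have hdiag : (diagonal d)ᴴ * diagonal d = 1 := by
      simp [diagonal_conjTranspose, fun j => Unitary.star_mul_self_of_mem (hd j)]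
    rw [conjTranspose_mul, Matrix.mul_assoc, ← Matrix.mul_assoc Hᴴ, hH.conjTranspose_mul,
      smul_mul_assoc, Matrix.one_mul, mul_smul_comm, hdiag]

theorem card_mul_det_bordered_of_isHadamard [TrivialStar R] (hH : H.IsHadamard) (a : R)
    (x y : n → R) :
    Fintype.card n * (bordered a x y H).det
      = (Fintype.card n * a - (H *ᵥ x) ⬝ᵥ y) * H.det := by
  refine mul_det_bordered ?_ a y
  rw [← vecMul_transpose, vecMul_vecMul, ← conjTranspose_eq_transpose_of_trivial,
    hH.conjTranspose_mul, vecMul_smul, vecMul_one]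

end Hadamard

section ThreeRows

/-- The sign of the sum of the `i`-th row of `H`, replaced by `0` for the rows in `T`; a vanishing
sum gets the sign `1`. -/
def rowSumSign [Fintype n] [DecidableEq n] (H : Matrix n n ℤ) (T : Finset n) (i : n) : ℤ :=
  if i ∈ T then 0 else if 0 ≤ ∑ j, H i j then 1 else -1

/-- The matrix `H` bordered by a row of ones, the signs of its row sums outside `T`, and the corner
entry `-2`. -/
def signBordered [Fintype n] [DecidableEq n] (H : Matrix n n ℤ) (T : Finset n) :
    Matrix (Unit ⊕ n) (Unit ⊕ n) ℤ :=
  bordered (-2) 1 (rowSumSign H T) H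

/-- The indicator of the border row and the rows in `T`. -/
def switchedRows [DecidableEq n] (T : Finset n) : Unit ⊕ n → ℤ :=
  Sum.elim 1 fun i => if i ∈ T then 1 else 0

/-- Half the sum of the border row of `signBordered H T` and its rows in `T`. The integer division
is exact when `T` consists of three rows whose entrywise product is `1`. -/
def switchVector (H : Matrix n n ℤ) (T : Finset n) : Unit ⊕ n → ℤ :=
  Sum.elim (-1) fun j => (1 + ∑ i ∈ T, H i j) / 2

/-- The matrix obtained from `signBordered H T` by subtracting `switchVector H T` from the border
row and from the rows in `T`. -/
def switchedBordered [Fintype n] [DecidableEq n] (H : Matrix n n ℤ) (T : Finset n) :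
    Matrix (Unit ⊕ n) (Unit ⊕ n) ℤ :=
  signBordered H T - vecMulVec (switchedRows T) (switchVector H T)

variable {H : Matrix n n ℤ} {T : Finset n}

theorem sum_eq_three_or_eq_neg_one {f : n → ℤ} (hf : ∀ i, f i = 1 ∨ f i = -1)
    (hT : T.card = 3) (hprod : ∏ i ∈ T, f i = 1) :
    ((∀ i ∈ T, f i = 1) ∧ ∑ i ∈ T, f i = 3) ∨ ∑ i ∈ T, f i = -1 := by
  classical
  obtain ⟨p, q, r, hpq, hpr, hqr, rfl⟩ := Finset.card_eq_three.mp hT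
  rcases hf p with hp | hp <;> rcases hf q with hq | hq <;> rcases hf r with hr | hr <;>
    simp_all

theorem switchVector_inr (hH : IsSignMatrix H)
    (hT : T.card = 3) (hprod : ∀ j, ∏ i ∈ T, H i j = 1) (j : n) :
    ((∀ i ∈ T, H i j = 1) ∧ switchVector H T (.inr j) = 2) ∨ switchVector H T (.inr j) = 0 := by
  rcases sum_eq_three_or_eq_neg_one (hH · j) hT (hprod j) with h | h <;>
    simp_all [switchVector]

variable [Fintype n] [DecidableEq n]

theorem isSignMatrix_switchedBordered (hH : IsSignMatrix H) (hT : T.card = 3)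
    (hprod : ∀ j, ∏ i ∈ T, H i j = 1) : IsSignMatrix (switchedBordered H T) := by
  rintro (_ | i) (_ | j)
  · simp [switchedBordered, signBordered, bordered, vecMulVec_apply, switchedRows, switchVector]
  · rcases switchVector_inr hH hT hprod j with ⟨-, hj⟩ | hj <;>
      simp [switchedBordered, signBordered, bordered, vecMulVec_apply, switchedRows, hj]
  · simp only [switchedBordered, signBordered, bordered, vecMulVec_apply, switchedRows,
      switchVector, rowSumSign, Matrix.sub_apply, fromBlocks_apply₂₁, replicateCol_apply,
      Sum.elim_inr, Sum.elim_inl]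
    split_ifs <;> simp
  · by_cases hi : i ∈ T <;> rcases switchVector_inr hH hT hprod j with ⟨hone, hj⟩ | hj <;>
      simp_all [switchedBordered, signBordered, bordered, vecMulVec_apply, switchedRows, hH i j]

theorem switchedRows_vecMul_signBordered (hH : IsSignMatrix H) (hT : T.card = 3)
    (hprod : ∀ j, ∏ i ∈ T, H i j = 1) :
    switchedRows T ᵥ* signBordered H T = (2 : ℤ) • switchVector H T := by
  ext (_ | j)
  · have hborder : ∑ i ∈ T, rowSumSign H T i = 0 :=
      Finset.sum_eq_zero fun i hi => if_pos hi
    simp [vecMul, dotProduct, switchedRows, signBordered, bordered, switchVector, hborder]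
  · rcases sum_eq_three_or_eq_neg_one (hH · j) hT (hprod j) with ⟨-, hsum⟩ | hsum <;>
      simp [vecMul, dotProduct, switchedRows, signBordered, bordered, switchVector, hsum]

theorem det_switchedBordered (hH : IsSignMatrix H) (hT : T.card = 3)
    (hprod : ∀ j, ∏ i ∈ T, H i j = 1) :
    (switchedBordered H T).det = -(signBordered H T).det := by
  have hcount : switchedRows T ⬝ᵥ switchedRows T = 4 := by
    simp [dotProduct, switchedRows, hT]
  have hdet :=
    mul_det_sub_vecMulVec (switchedRows_vecMul_signBordered hH hT hprod) (switchedRows T)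
  rw [hcount] at hdet
  unfold switchedBordered
  linarith

theorem sum_row_eq_zero (hH : H.IsHadamard) (hT : T.card = 3)
    (hprod : ∀ j, ∏ i ∈ T, H i j = 1) {i : n} (hi : i ∈ T) : ∑ j, H i j = 0 := by
  obtain ⟨k, l, hkl, herase⟩ : ∃ k l, k ≠ l ∧ T.erase i = {k, l} := by
    rw [← Finset.card_eq_two, Finset.card_erase_of_mem hi, hT]
  rw [← sum_mul_eq_zero_of_isHadamard hH hkl]
  refine Finset.sum_congr rfl fun j _ => ?_
  have hj : H i j * (H k j * H l j) = 1 := by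
    rw [← hprod j, ← Finset.mul_prod_erase T _ hi, herase, Finset.prod_pair hkl]
  exact Int.eq_of_mul_eq_one hj

theorem mulVec_one_dotProduct_rowSumSign (hH : H.IsHadamard) (hT : T.card = 3)
    (hprod : ∀ j, ∏ i ∈ T, H i j = 1) :
    (H *ᵥ 1) ⬝ᵥ rowSumSign H T = ∑ i, |∑ j, H i j| := by
  refine Finset.sum_congr rfl fun i _ => ?_
  by_cases hi : i ∈ T
  · simp [rowSumSign, hi, sum_row_eq_zero hH hT hprod]
  · rcases le_or_gt 0 (∑ j, H i j) with h | h
    · simp [mulVec, dotProduct, rowSumSign, hi, h, abs_of_nonneg h]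
    · simp [mulVec, dotProduct, rowSumSign, hi, h.not_ge, abs_of_neg h]

theorem card_mul_det_switchedBordered (hH : H.IsHadamard) (hT : T.card = 3)
    (hprod : ∀ j, ∏ i ∈ T, H i j = 1) :
    Fintype.card n * (switchedBordered H T).det
      = (2 * Fintype.card n + ∑ i, |∑ j, H i j|) * H.det := by
  have hdet := card_mul_det_bordered_of_isHadamard hH (-2) 1 (rowSumSign H T)
  rw [mulVec_one_dotProduct_rowSumSign hH hT hprod] at hdet
  rw [det_switchedBordered (isSignMatrix_of_isHadamard hH) hT hprod, signBordered]
  linear_combination -hdet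

theorem exists_isSignMatrix_card_mul_det_sq (hH : H.IsHadamard) (hT : T.card = 3) :
    ∃ M : Matrix (Unit ⊕ n) (Unit ⊕ n) ℤ, IsSignMatrix M ∧
      (Fintype.card n * M.det) ^ 2
        = (2 * Fintype.card n + ∑ i, |∑ j, H i j * ∏ k ∈ T, H k j|) ^ 2
          * Fintype.card n ^ Fintype.card n := by
  set d : n → ℤ := fun j => ∏ k ∈ T, H k j with hd
  have hdu (j) : d j ∈ unitary ℤ := prod_mem fun k _ => hH.apply_mem k j
  have hG : (H * diagonal d).IsHadamard := isHadamard_mul_diagonal hH hdu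
  have hprod (j) : ∏ i ∈ T, (H * diagonal d) i j = 1 := by
    have hdj : d j * d j = 1 := by simpa using Unitary.mul_star_self_of_mem (hdu j)
    simp only [mul_diagonal, Finset.prod_mul_distrib, Finset.prod_const, hT]
    linear_combination (d j * d j + 1) * hdj
  refine ⟨switchedBordered (H * diagonal d) T,
    isSignMatrix_switchedBordered (isSignMatrix_of_isHadamard hG) hT hprod, ?_⟩
  rw [card_mul_det_switchedBordered hG hT hprod, mul_pow, det_sq_of_isHadamard hG]
  simp only [mul_diagonal, hd]

end ThreeRows

section Williamson

/-- The Williamson array of four matrices, patterned after the multiplication matrix of a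
quaternion. -/
def williamson [Neg R] (A : Fin 4 → Matrix n n R) :
    Matrix ((n ⊕ n) ⊕ (n ⊕ n)) ((n ⊕ n) ⊕ (n ⊕ n)) R :=
  fromBlocks
    (fromBlocks (A 0) (A 1) (-A 1) (A 0)) (fromBlocks (A 2) (A 3) (-A 3) (A 2))
    (fromBlocks (-A 2) (A 3) (-A 3) (-A 2)) (fromBlocks (A 0) (-A 1) (A 1) (A 0))

theorem isSignMatrix_williamson {A : Fin 4 → Matrix n n ℤ} (hA : ∀ k, IsSignMatrix (A k)) :
    IsSignMatrix (williamson A) := by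
  have hneg {k i j} : A k i j = -1 ∨ A k i j = 1 := (hA k i j).symm
  rintro ((i | i) | (i | i)) ((j | j) | (j | j)) <;>
    simp [williamson, neg_eq_iff_eq_neg, hA _ i j, hneg]

variable [Fintype n] [DecidableEq n]

theorem williamson_mul_transpose [Ring R] {A : Fin 4 → Matrix n n R} {c : R}
    (hsymm : ∀ k, (A k).IsSymm) (hcomm : ∀ k l, Commute (A k) (A l))
    (hsum : ∑ k, A k * A k = c • 1) :
    williamson A * (williamson A)ᵀ = c • 1 := by
  rw [Fin.sum_univ_four] at hsum
  simp only [williamson, fromBlocks_transpose, fromBlocks_multiply, transpose_neg,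
    (hsymm _).eq, (hcomm 1 0).eq, (hcomm 2 0).eq, (hcomm 3 0).eq, (hcomm 2 1).eq, (hcomm 3 1).eq,
    (hcomm 3 2).eq, neg_mul, mul_neg, neg_neg, fromBlocks_add]
  rw [← fromBlocks_one, ← fromBlocks_one, fromBlocks_smul, fromBlocks_smul, ← hsum, smul_zero,
    smul_zero, ← fromBlocks_zero]
  simp only [fromBlocks_inj]
  refine ⟨⟨?_, ?_, ?_, ?_⟩, ⟨?_, ?_, ?_, ?_⟩, ⟨?_, ?_, ?_, ?_⟩, ?_, ?_, ?_, ?_⟩ <;> abel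

theorem isHadamard_williamson_circulant [AddCommGroup n] {x : Fin 4 → n → ℤ}
    (hsign : ∀ k i, x k i = 1 ∨ x k i = -1) (heven : ∀ k i, x k (-i) = x k i)
    (hsum : ∑ k, circulant (x k) *ᵥ x k = Pi.single 0 (4 * Fintype.card n : ℤ)) :
    (williamson fun k => circulant (x k)).IsHadamard := by
  have hsquares : ∑ k, circulant (x k) * circulant (x k) = (4 * Fintype.card n : ℤ) • 1 := by
    have hcirc : ∑ k, circulant (x k) * circulant (x k)
        = circulant (∑ k, circulant (x k) *ᵥ x k) := by
      simp only [circulant_mul, Fin.sum_univ_four, circulant_add]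
    rw [hcirc, hsum, circulant_single, scalar_apply, smul_one_eq_diagonal]
  have hcard : Fintype.card ((n ⊕ n) ⊕ (n ⊕ n)) = (4 * Fintype.card n : ℤ) := by
    simp only [Fintype.card_sum]
    push_cast
    ring
  refine IsHadamard.of_mul_conjTranspose
    (fun i j => Unitary.mem_iff_eq_one_or_eq_neg_one.mpr
      (isSignMatrix_williamson (fun k i j => hsign k (i - j)) i j)) ?_ ?_
  · rw [conjTranspose_eq_transpose_of_trivial, hcard]
    exact williamson_mul_transpose (fun k => circulant_isSymm_iff.mpr (heven k))
      (fun k l => circulant_mul_comm (x k) (x l)) hsquares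
  · rw [hcard]
    exact IsRegular.of_ne_zero (by simp [Fintype.card_ne_zero])

end Williamson

section Order52

/-- Generators of four symmetric circulant matrices of order `13` whose squares add up to `52`. -/
def williamson13 : Fin 4 → Fin 13 → ℤ :=
  ![![1, 1, 1, 1, -1, -1, 1, 1, -1, -1, 1, 1, 1],
    ![1, 1, 1, -1, -1, 1, -1, -1, 1, -1, -1, 1, 1],
    ![1, 1, -1, 1, -1, 1, -1, -1, 1, -1, 1, -1, 1],
    ![1, -1, 1, 1, 1, 1, -1, -1, 1, 1, 1, 1, -1]]

/-- A Hadamard matrix of order `52`. -/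
def hadamard52 : Matrix ((Fin 13 ⊕ Fin 13) ⊕ (Fin 13 ⊕ Fin 13))
    ((Fin 13 ⊕ Fin 13) ⊕ (Fin 13 ⊕ Fin 13)) ℤ :=
  williamson fun k => circulant (williamson13 k)

theorem isHadamard_hadamard52 : hadamard52.IsHadamard :=
  isHadamard_williamson_circulant (by decide) (by decide) (by decide +kernel)

/-- Three rows of `hadamard52`, found by search, whose entrywise product has large inner products
with the remaining rows. -/
def rows52 : Finset ((Fin 13 ⊕ Fin 13) ⊕ (Fin 13 ⊕ Fin 13)) :=
  {.inl (.inl 0), .inl (.inl 1), .inl (.inl 2)}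

theorem sum_abs_sum_hadamard52 :
    ∑ i, |∑ j, hadamard52 i j * ∏ k ∈ rows52, hadamard52 k j| = 316 := by
  decide +kernel

theorem exists_isSignMatrix_abs_det_eq :
    ∃ M : Matrix (Unit ⊕ ((Fin 13 ⊕ Fin 13) ⊕ (Fin 13 ⊕ Fin 13))) _ ℤ,
      IsSignMatrix M ∧ |M.det| = 2 ^ 52 * 13 ^ 25 * 105 := by
  obtain ⟨M, hM, hdet⟩ :=
    exists_isSignMatrix_card_mul_det_sq isHadamard_hadamard52 (T := rows52) rfl
  refine ⟨M, hM, ?_⟩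
  have hcard : Fintype.card ((Fin 13 ⊕ Fin 13) ⊕ (Fin 13 ⊕ Fin 13)) = 52 := rfl
  have hvalue : (2 * 52 + 316) ^ 2 * 52 ^ 52 = (52 * (2 ^ 52 * 13 ^ 25 * 105) : ℤ) ^ 2 := by
    norm_num
  rw [sum_abs_sum_hadamard52, hcard, Nat.cast_ofNat, hvalue, sq_eq_sq_iff_abs_eq_abs, abs_mul,
    abs_mul] at hdet
  norm_num at hdet ⊢
  linarith

end Order52

theorem stmt_11 :
    (∃ M : Matrix (Fin 53) (Fin 53) ℤ,
      (∀ i j, M i j = 1 ∨ M i j = -1) ∧ M.det = 2^52 * 13^25 * 105) ∧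
    (2^52 * 13^25 * 105 : ℤ) ≤ md 53 := by
  obtain ⟨M, hM, hdet⟩ := exists_isSignMatrix_abs_det_eq
  obtain ⟨N, hN, hNdet⟩ := hM.exists_det_eq_abs
  obtain ⟨P, hP, hPdet⟩ := hN.exists_fin_det_eq (k := 53) rfl
  have hP_eq : P.det = 2 ^ 52 * 13 ^ 25 * 105 := by rw [hPdet, hNdet, hdet]
  exact ⟨⟨P, hP, hP_eq⟩, hP_eq ▸ hP.det_le_md⟩
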